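/- Let G = (V,E) be a finite simple graph with a decomposition (A,C,B) of V, and let M be a real symmetric V×V matrix whose principal submatrices M_{AA} and M_{BB} are invertible. Then the following are equivalent: (1) M ∈ P_G; (2) M = M_1 + M_2 for some matrices M_1 ∈ P_{G_{A∪C}} and M_2 ∈ P_{G_{B∪C}} (matrices indexed by subsets of V are identified with V×V matrices by padding with zeros). -/

import Mathlib

open Set Matrix

noncomputable section

/-- Entrywise power function `x ↦ x^α` on nonnegative reals, with the convention `0^α := 0`. -/
def powEnt (α x : ℝ) : ℝ := if x = 0 then 0 else x ^ α

/-- The odd extension `ψ_α(x) = sgn(x)|x|^α` of the power function, with `ψ_α(0) = 0`. -/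
def psiF (α x : ℝ) : ℝ := Real.sign x * |x| ^ α

/-- The even extension `φ_α(x) = |x|^α` of the power function, with `φ_α(0) = 0`. -/
def phiF (α x : ℝ) : ℝ := if x = 0 then 0 else |x| ^ α

/-- `P_G(I)`: positive semidefinite matrices with entries in `I` and zeros outside
the edge pattern of `G`. -/
def PsetG {V : Type*} [Fintype V] (G : SimpleGraph V) (I : Set ℝ) :
    Set (Matrix V V ℝ) :=
  {A | A.PosSemidef ∧ (∀ i j, A i j ∈ I) ∧ ∀ i j, i ≠ j → ¬ G.Adj i j → A i j = 0}

/-- `H_G`: the set of entrywise powers preserving `P_G([0,∞))`. -/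
def HsetG {V : Type*} [Fintype V] (G : SimpleGraph V) : Set ℝ :=
  {α | ∀ A ∈ PsetG G (Ici (0 : ℝ)), A.map (powEnt α) ∈ PsetG G univ}

/-- `H_G^ψ`: the set of powers `α` such that `ψ_α` preserves `P_G(ℝ)`. -/
def HsetPsi {V : Type*} [Fintype V] (G : SimpleGraph V) : Set ℝ :=
  {α | ∀ A ∈ PsetG G univ, A.map (psiF α) ∈ PsetG G univ}

/-- `H_G^φ`: the set of powers `α` such that `φ_α` preserves `P_G(ℝ)`. -/
def HsetPhi {V : Type*} [Fintype V] (G : SimpleGraph V) : Set ℝ :=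
  {α | ∀ A ∈ PsetG G univ, A.map (phiF α) ∈ PsetG G univ}

/-- The set of which the critical exponent is the least element:
all `α` such that every `β ≥ α` lies in `H`. -/
def CEset (H : Set ℝ) : Set ℝ := {α | ∀ β, α ≤ β → β ∈ H}

/-- The positive integers, as a set of reals. -/
def posNats : Set ℝ := {x | ∃ k : ℕ, 0 < k ∧ x = k}

/-- The odd positive integers `−1+2ℕ`, as a set of reals. -/
def oddNats : Set ℝ := {x | ∃ k : ℕ, 0 < k ∧ x = 2 * k - 1}

/-- The even positive integers `2ℕ`, as a set of reals. -/
def evenNats : Set ℝ := {x | ∃ k : ℕ, 0 < k ∧ x = 2 * k}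

/-- A decomposition `(A,C,B)` of a graph `G`: a partition of the vertices such that `C`
separates `A` from `B` (every walk from `A` to `B` meets `C`) and `C` induces a complete
subgraph. -/
def IsDecomposition {V : Type*} (G : SimpleGraph V) (A C B : Set V) : Prop :=
  (∀ v, v ∈ A ∨ v ∈ C ∨ v ∈ B) ∧
  Disjoint A C ∧ Disjoint A B ∧ Disjoint C B ∧
  (∀ a ∈ A, ∀ b ∈ B, ∀ p : G.Walk a b, ∃ c ∈ C, c ∈ p.support) ∧
  (∀ c₁ ∈ C, ∀ c₂ ∈ C, c₁ ≠ c₂ → G.Adj c₁ c₂)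

/-- `P_{G_S}` for a subset `S` of the vertices, identified with full-size matrices by padding
with zeros: positive semidefinite matrices supported on `S × S` whose zero pattern respects
the (induced subgraph of the) graph `G`. -/
def PsetSub {V : Type*} [Fintype V] (G : SimpleGraph V) (S : Set V) :
    Set (Matrix V V ℝ) :=
  {M | M.PosSemidef ∧ (∀ i j, (i ∉ S ∨ j ∉ S) → M i j = 0) ∧
    ∀ i j, i ≠ j → ¬ G.Adj i j → M i j = 0}

/-!
A positive semidefinite matrix is a Gram matrix `M i j = ⟪v i, v j⟫`. Since `A` and `B` are not
joined by an edge, the vectors `v a` with `a ∈ A` are orthogonal to the vectors `v b` with `b ∈ B`.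
Projecting all the `v i` onto `U = span {v a | a ∈ A}` and onto `Uᗮ` splits `M` into two Gram
matrices; the first vanishes on the rows and columns of `B` and the second on those of `A`. The two
summands overlap only on the clique `C`, so neither can violate the zero pattern of `G`. When
`M_{AA}` is invertible, the second summand is the zero-padded Schur complement of `M_{AA}` in `M`.
-/

/-- `M` is supported on `S × S`, i.e. it is an `S × S` matrix padded with zeros. -/
def IsSupportedOn {V R : Type*} [Zero R] (M : Matrix V V R) (S : Set V) : Prop :=
  ∀ i j, i ∉ S ∨ j ∉ S → M i j = 0

/-- `M` has the zero pattern of the graph `G`: its off-diagonal entries vanish at non-edges. -/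
def HasZeroPattern {V R : Type*} [Zero R] (G : SimpleGraph V) (M : Matrix V V R) : Prop :=
  ∀ i j, i ≠ j → ¬ G.Adj i j → M i j = 0

theorem mem_psetG_univ {V : Type*} [Fintype V] {G : SimpleGraph V} {M : Matrix V V ℝ} :
    M ∈ PsetG G univ ↔ M.PosSemidef ∧ HasZeroPattern G M := by
  simp only [PsetG, HasZeroPattern, mem_ofPred_eq, mem_univ, implies_true, true_and]

section ZeroPattern

variable {V R : Type*} {G : SimpleGraph V} {M N : Matrix V V R}

theorem HasZeroPattern.add [AddZeroClass R] (hM : HasZeroPattern G M) (hN : HasZeroPattern G N) :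
    HasZeroPattern G (M + N) := fun i j hij hadj => by
  rw [Matrix.add_apply, hM i j hij hadj, hN i j hij hadj, add_zero]

theorem HasZeroPattern.of_add_left [AddZeroClass R] {S T : Set V} (hMN : HasZeroPattern G (M + N))
    (hM : IsSupportedOn M S) (hN : IsSupportedOn N T) (hST : G.IsClique (S ∩ T)) :
    HasZeroPattern G M := by
  intro i j hij hadj
  by_cases hS : i ∈ S ∧ j ∈ S
  · have hT : i ∉ T ∨ j ∉ T := by
      by_contra! hT
      exact hadj (hST ⟨hS.1, hT.1⟩ ⟨hS.2, hT.2⟩ hij)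
    simpa only [Matrix.add_apply, hN i j hT, add_zero] using hMN i j hij hadj
  · exact hM i j (not_and_or.1 hS)

theorem HasZeroPattern.of_add_right [AddCommMonoid R] {S T : Set V}
    (hMN : HasZeroPattern G (M + N)) (hM : IsSupportedOn M S) (hN : IsSupportedOn N T)
    (hST : G.IsClique (S ∩ T)) : HasZeroPattern G N :=
  .of_add_left (add_comm M N ▸ hMN) hN hM (inter_comm S T ▸ hST)

end ZeroPattern

namespace IsDecomposition

variable {V : Type*} {G : SimpleGraph V} {A C B : Set V}

theorem symm (h : IsDecomposition G A C B) : IsDecomposition G B C A := by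
  obtain ⟨hcover, hAC, hAB, hCB, hsep, hclique⟩ := h
  refine ⟨fun v => (hcover v).rotate.rotate.imp_right Or.symm, hCB.symm, hAB.symm, hAC.symm,
    fun b hb a ha p => ?_, hclique⟩
  simpa only [SimpleGraph.Walk.support_reverse, List.mem_reverse] using hsep a ha b hb p.reverse

theorem not_adj (h : IsDecomposition G A C B) {a b : V} (ha : a ∈ A) (hb : b ∈ B) :
    ¬ G.Adj a b := by
  obtain ⟨-, hAC, -, hCB, hsep, -⟩ := h
  intro hab
  obtain ⟨c, hc, hcp⟩ := hsep a ha b hb hab.toWalk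
  obtain rfl | rfl : c = a ∨ c = b := by simpa using hcp
  · exact hAC.notMem_of_mem_left ha hc
  · exact hCB.notMem_of_mem_left hc hb

theorem union_eq_compl (h : IsDecomposition G A C B) : A ∪ C = Bᶜ := by
  obtain ⟨hcover, -, hAB, hCB, -⟩ := h
  refine (hAB.union_left hCB).subset_compl_right.antisymm fun v hv => ?_
  exact (or_assoc.2 (hcover v)).resolve_right hv

theorem isClique_union_inter_union (h : IsDecomposition G A C B) :
    G.IsClique ((A ∪ C) ∩ (B ∪ C)) := by
  obtain ⟨-, -, hAB, -, -, hclique⟩ := h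
  rw [← inter_union_distrib_right, hAB.inter_eq, empty_union]
  exact fun c₁ hc₁ c₂ hc₂ hne => hclique c₁ hc₁ c₂ hc₂ hne

end IsDecomposition

section Gram

open scoped ComplexOrder

variable {n 𝕜 E : Type*} [RCLike 𝕜]

theorem exists_eq_gram_of_posSemidef [Fintype n] {M : Matrix n n 𝕜} (hM : M.PosSemidef) :
    ∃ v : n → EuclideanSpace 𝕜 n, M = gram 𝕜 v := by
  classical
  open scoped MatrixOrder in
  obtain ⟨L, rfl⟩ := CStarAlgebra.nonneg_iff_eq_star_mul_self.mp hM.nonneg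
  refine ⟨fun i => WithLp.toLp 2 (L.col i), ?_⟩
  ext i j
  simp [Matrix.mul_apply, star_eq_conjTranspose, PiLp.inner_apply, mul_comm]

variable [NormedAddCommGroup E] [InnerProductSpace 𝕜 E]

theorem gram_starProjection_add_gram_starProjection_orthogonal (U : Submodule 𝕜 E)
    [U.HasOrthogonalProjection] (v : n → E) :
    gram 𝕜 (U.starProjection ∘ v) + gram 𝕜 (Uᗮ.starProjection ∘ v) = gram 𝕜 v := by
  ext i j
  have hU : inner 𝕜 (U.starProjection (v i)) (Uᗮ.starProjection (v j)) = 0 :=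
    U.inner_right_of_mem_orthogonal (U.starProjection_apply_mem _) (Uᗮ.starProjection_apply_mem _)
  have hU' : inner 𝕜 (Uᗮ.starProjection (v i)) (U.starProjection (v j)) = 0 :=
    U.inner_left_of_mem_orthogonal (U.starProjection_apply_mem _) (Uᗮ.starProjection_apply_mem _)
  calc
    _ = inner 𝕜 (U.starProjection (v i) + Uᗮ.starProjection (v i))
          (U.starProjection (v j) + Uᗮ.starProjection (v j)) := by
      simp only [Matrix.add_apply, gram_apply, Function.comp_apply, inner_add_left,
        inner_add_right, hU, hU', add_zero, zero_add]
    _ = _ := by simp only [Submodule.starProjection_add_starProjection_orthogonal, gram_apply]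

theorem isSupportedOn_gram_starProjection {U : Submodule 𝕜 E} [U.HasOrthogonalProjection]
    {v : n → E} {s : Set n} (hv : ∀ i ∈ s, v i ∈ Uᗮ) :
    IsSupportedOn (gram 𝕜 (U.starProjection ∘ v)) sᶜ := by
  have hzero (i : n) (hi : i ∉ sᶜ) : U.starProjection (v i) = 0 :=
    U.starProjection_apply_eq_zero_iff.2 (hv i (notMem_compl_iff.1 hi))
  rintro i j (hi | hj)
  · rw [gram_apply, Function.comp_apply, hzero i hi, inner_zero_left]
  · rw [gram_apply, Function.comp_apply (x := j), hzero j hj, inner_zero_right]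

theorem exists_posSemidef_add_of_forall_eq_zero [Finite n] {M : Matrix n n 𝕜}
    (hM : M.PosSemidef) {s t : Set n} (hst : ∀ i ∈ s, ∀ j ∈ t, M i j = 0) :
    ∃ M₁ M₂ : Matrix n n 𝕜, M₁.PosSemidef ∧ IsSupportedOn M₁ tᶜ ∧
      M₂.PosSemidef ∧ IsSupportedOn M₂ sᶜ ∧ M = M₁ + M₂ := by
  have := Fintype.ofFinite n
  obtain ⟨v, rfl⟩ := exists_eq_gram_of_posSemidef hM
  set U : Submodule 𝕜 (EuclideanSpace 𝕜 n) := Submodule.span 𝕜 (v '' s)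
  have hs (i : n) (hi : i ∈ s) : v i ∈ U := Submodule.subset_span (mem_image_of_mem v hi)
  have ht (j : n) (hj : j ∈ t) : v j ∈ Uᗮ := by
    have hUt : U ⟂ Submodule.span 𝕜 (v '' t) := by
      rw [Submodule.isOrtho_span]
      rintro _ ⟨i, hi, rfl⟩ _ ⟨k, hk, rfl⟩
      exact hst i hi k hk
    exact hUt.symm (Submodule.subset_span (mem_image_of_mem v hj))
  exact ⟨gram 𝕜 (U.starProjection ∘ v), gram 𝕜 (Uᗮ.starProjection ∘ v),
    posSemidef_gram 𝕜 _, isSupportedOn_gram_starProjection ht,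
    posSemidef_gram 𝕜 _,
    isSupportedOn_gram_starProjection fun i hi => U.le_orthogonal_orthogonal (hs i hi),
    (gram_starProjection_add_gram_starProjection_orthogonal U v).symm⟩

end Gram

theorem decomposition_of_matrix_general {V : Type*} [Fintype V] (G : SimpleGraph V)
    {A C B : Set V} (hdec : IsDecomposition G A C B) (M : Matrix V V ℝ) :
    M ∈ PsetG G univ ↔
      ∃ M₁ ∈ PsetSub G (A ∪ C), ∃ M₂ ∈ PsetSub G (B ∪ C), M = M₁ + M₂ := by
  rw [mem_psetG_univ]
  constructor
  · rintro ⟨hM, hpat⟩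
    have hdisj : Disjoint A B := hdec.2.2.1
    have hAB : ∀ a ∈ A, ∀ b ∈ B, M a b = 0 := fun a ha b hb =>
      hpat a b (hdisj.ne_of_mem ha hb) (hdec.not_adj ha hb)
    obtain ⟨M₁, M₂, hM₁, hsupp₁, hM₂, hsupp₂, rfl⟩ :=
      exists_posSemidef_add_of_forall_eq_zero hM hAB
    rw [← hdec.union_eq_compl] at hsupp₁
    rw [← hdec.symm.union_eq_compl] at hsupp₂
    have hclique := hdec.isClique_union_inter_union
    exact ⟨M₁, ⟨hM₁, hsupp₁, hpat.of_add_left hsupp₁ hsupp₂ hclique⟩,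
      M₂, ⟨hM₂, hsupp₂, hpat.of_add_right hsupp₁ hsupp₂ hclique⟩, rfl⟩
  · rintro ⟨M₁, ⟨hM₁, -, hpat₁⟩, M₂, ⟨hM₂, -, hpat₂⟩, rfl⟩
    exact ⟨hM₁.add hM₂, HasZeroPattern.add hpat₁ hpat₂⟩

/-- **Lemma 3.6**: if `(A,C,B)` is a decomposition of `G` and `M` is a symmetric matrix whose
principal submatrices `M_{AA}` and `M_{BB}` are invertible, then `M ∈ P_G` if and only if
`M = M₁ + M₂` with `M₁ ∈ P_{G_{A∪C}}` and `M₂ ∈ P_{G_{B∪C}}` (padding by zeros). -/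
theorem decomposition_of_matrix {V : Type*} [Fintype V] [DecidableEq V] (G : SimpleGraph V)
    (A C B : Finset V) (hdec : IsDecomposition G ↑A ↑C ↑B)
    (M : Matrix V V ℝ) (hsymm : M.IsSymm)
    (hA : IsUnit (M.submatrix (fun a : ↥A => (a : V)) (fun a : ↥A => (a : V))))
    (hB : IsUnit (M.submatrix (fun b : ↥B => (b : V)) (fun b : ↥B => (b : V)))) :
    M ∈ PsetG G univ ↔
      ∃ M₁ ∈ PsetSub G ↑(A ∪ C), ∃ M₂ ∈ PsetSub G ↑(B ∪ C), M = M₁ + M₂ := by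
  simpa only [Finset.coe_union] using decomposition_of_matrix_general G hdec M
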